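/- Let (X,T) be a uniquely ergodic t.d.s. whose unique invariant Borel probability measure μ makes (X,ℬ(X),μ,T) weakly mixing, and let d ∈ ℕ. Then: (1) the action of the parallelepiped group G^{[d]} on X^{[d]} = X^{2^d} is uniquely ergodic, and its unique invariant measure is the 2^d-fold product measure μ×···×μ; (2) the action of the face group F^{[d]} on X^{[d]}_* = X^{2^d−1} (coordinates indexed by nonzero ε ∈ {0,1}^d) is uniquely ergodic, and its unique invariant measure is the (2^d−1)-fold product measure μ×···×μ. -/

import Mathlib

open MeasureTheory Topology Filter

namespace HSY

/-- The group structure on self-homeomorphisms of a topological space,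
with `a * b = b.trans a` (i.e. composition `a ∘ b`). -/
instance homeoGroup (X : Type*) [TopologicalSpace X] : Group (X ≃ₜ X) where
  mul a b := b.trans a
  one := Homeomorph.refl X
  inv := Homeomorph.symm
  mul_assoc a b c := rfl
  one_mul a := by ext x; rfl
  mul_one a := by ext x; rfl
  inv_mul_cancel a := by
    show a.trans a.symm = Homeomorph.refl X
    ext x; exact a.symm_apply_apply x

/-- The `j`-th face transformation of dimension `d`: it applies `S` to the coordinates `ε`
with `ε j = 1` and leaves the other coordinates unchanged. -/
def faceHomeo {Y : Type*} [TopologicalSpace Y] (S : Y ≃ₜ Y) {d : ℕ} (j : Fin d) :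
    ((Fin d → Bool) → Y) ≃ₜ ((Fin d → Bool) → Y) :=
  Homeomorph.piCongrRight fun ε => if ε j then S else Homeomorph.refl Y

/-- The generators of the face group `F^[d]`. -/
def faceGens {Y : Type*} [TopologicalSpace Y] (S : Y ≃ₜ Y) (d : ℕ) :
    Set (((Fin d → Bool) → Y) ≃ₜ ((Fin d → Bool) → Y)) :=
  Set.range fun j : Fin d => faceHomeo S j

/-- The diagonal transformation `S × ⋯ × S` of dimension `d`. -/
def diagHomeo {Y : Type*} [TopologicalSpace Y] (S : Y ≃ₜ Y) (d : ℕ) :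
    ((Fin d → Bool) → Y) ≃ₜ ((Fin d → Bool) → Y) :=
  Homeomorph.piCongrRight fun _ => S

/-- The generators of the parallelepiped group `G^[d]` : the face transformations together
with the diagonal transformation. -/
def parallelepipedGens {Y : Type*} [TopologicalSpace Y] (S : Y ≃ₜ Y) (d : ℕ) :
    Set (((Fin d → Bool) → Y) ≃ₜ ((Fin d → Bool) → Y)) :=
  insert (diagHomeo S d) (faceGens S d)

/-- The dynamical parallelepiped `Q^[d]`, the closure of the set of points
`(S^(n·ε) y)_{ε ∈ {0,1}^d}`. -/
def Qset {Y : Type*} [TopologicalSpace Y] (S : Y ≃ₜ Y) (d : ℕ) : Set ((Fin d → Bool) → Y) :=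
  closure {c | ∃ (n : Fin d → ℤ) (y : Y),
    c = fun ε => (S ^ (∑ i, if ε i then n i else 0)) y}

/-- The nonzero elements of `{0,1}^d`. -/
def starIndex (d : ℕ) := {ε : Fin d → Bool // ε ≠ fun _ => false}

instance (d : ℕ) : Fintype (starIndex d) := by unfold starIndex; infer_instance

/-- The `j`-th face transformation of dimension `d` acting on `X^[d]_* = X^{2^d - 1}`. -/
def faceHomeoStar {Y : Type*} [TopologicalSpace Y] (S : Y ≃ₜ Y) {d : ℕ} (j : Fin d) :
    (starIndex d → Y) ≃ₜ (starIndex d → Y) :=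
  Homeomorph.piCongrRight fun ε => if ε.1 j then S else Homeomorph.refl Y

/-- The generators of the face group `F^[d]` acting on `X^[d]_*`. -/
def faceGensStar {Y : Type*} [TopologicalSpace Y] (S : Y ≃ₜ Y) (d : ℕ) :
    Set ((starIndex d → Y) ≃ₜ (starIndex d → Y)) :=
  Set.range fun j : Fin d => faceHomeoStar S j

/-!
Only two properties of the family of maps matter: every coordinate is moved by some map, and any
two coordinates are told apart by some map, which moves one of them and fixes the other. The first
and unique ergodicity force each one-dimensional marginal of an invariant probability measure to be
`μ`. For the second, split a block of coordinates into the coordinates moved by a map `g` and those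
fixed by `g`. On the moved block `g` acts as a product of copies of `T`, which is ergodic because
`T` is weakly mixing, so this block is independent of every `g`-invariant function, in particular
of the fixed block. Splitting repeatedly makes all coordinates independent.

That weakly mixing times ergodic is ergodic is a second moment argument. If `E ⊆ Y × X` is
invariant, ergodicity of `T × T` gives, for every `A ⊆ X`, that `y ↦ μ (A ∩ E_y)` has second moment
equal to the square of its mean. It is therefore constant, so `E` is independent of every
rectangle, hence of itself.
-/

section Fibers

variable {X Y : Type*} {T : X → X} {S : Y → Y}

/-- The fibre square of `E ⊆ Y × X` over `Y`: its fibre over `y` is `E_y × E_y`, where `E_y` is the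
fibre of `E`. It turns squares of fibre measures into measures. -/
def fiberSquare (E : Set (Y × X)) : Set (Y × (X × X)) :=
  {q | (q.1, q.2.1) ∈ E ∧ (q.1, q.2.2) ∈ E}

theorem preimage_fiberSquare {E : Set (Y × X)} (hinv : Prod.map S T ⁻¹' E = E) :
    Prod.map S (Prod.map T T) ⁻¹' fiberSquare E = fiberSquare E := by
  conv_rhs => rw [← hinv]
  rfl

theorem fiberSquare_inter_univ_prod (E : Set (Y × X)) (A : Set X) :
    fiberSquare (E ∩ Set.univ ×ˢ A) = fiberSquare E ∩ Set.univ ×ˢ (A ×ˢ A) := by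
  ext
  simp [fiberSquare, and_and_and_comm]

variable [MeasurableSpace X] [MeasurableSpace Y] {μ : Measure X} {ν : Measure Y}

theorem ae_measure_prodMk_preimage_eq [IsProbabilityMeasure ν] [SFinite μ] (hS : Ergodic S ν)
    (hT : MeasurePreserving T μ μ) {E : Set (Y × X)} (hE : MeasurableSet E)
    (hinv : Prod.map S T ⁻¹' E = E) :
    ∀ᵐ y ∂ν, μ (Prod.mk y ⁻¹' E) = (ν.prod μ) E := by
  have fiber_invariant : (fun y => μ (Prod.mk y ⁻¹' E)) ∘ S = fun y => μ (Prod.mk y ⁻¹' E) := by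
    ext y
    calc μ (Prod.mk (S y) ⁻¹' E) = μ (T ⁻¹' (Prod.mk (S y) ⁻¹' E)) :=
          (hT.measure_preimage (measurable_prodMk_left hE).nullMeasurableSet).symm
      _ = μ (Prod.mk y ⁻¹' (Prod.map S T ⁻¹' E)) := rfl
      _ = μ (Prod.mk y ⁻¹' E) := by rw [hinv]
  obtain ⟨c, hc⟩ :=
    hS.ae_eq_const_of_ae_eq_comp (measurable_measure_prodMk_left hE) fiber_invariant
  have hc_eq : (ν.prod μ) E = c := by
    rw [Measure.prod_apply hE, lintegral_congr_ae hc]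
    simp
  rwa [hc_eq]

theorem ae_measure_prodMk_right_preimage_eq [SFinite ν] [IsProbabilityMeasure μ]
    (hS : MeasurePreserving S ν ν) (hT : Ergodic T μ) {E : Set (Y × X)} (hE : MeasurableSet E)
    (hinv : Prod.map S T ⁻¹' E = E) :
    ∀ᵐ x ∂μ, ν ((fun y => (y, x)) ⁻¹' E) = (ν.prod μ) E := by
  have hswap : Prod.map T S ⁻¹' (Prod.swap ⁻¹' E) = Prod.swap ⁻¹' E := by
    conv_rhs => rw [← hinv]
    rfl
  rw [← (Measure.measurePreserving_swap (μ := μ) (ν := ν)).measure_preimage hE.nullMeasurableSet]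
  exact ae_measure_prodMk_preimage_eq hT hS (measurable_swap hE) hswap

theorem prod_inter_prod_univ_of_ae_eq [SFinite ν] [SFinite μ] {E : Set (Y × X)}
    (hE : MeasurableSet E) {c : ENNReal} (hc : ∀ᵐ y ∂ν, μ (Prod.mk y ⁻¹' E) = c) (B : Set Y) :
    (ν.prod μ) (E ∩ B ×ˢ Set.univ) = c * ν B := by
  rw [← Measure.restrict_apply hE, ← Measure.restrict_prod_eq_prod_univ, Measure.prod_apply hE,
    lintegral_congr_ae (ae_restrict_of_ae hc)]
  simp

theorem prod_inter_univ_prod_of_ae_eq [SFinite ν] [SFinite μ] {E : Set (Y × X)}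
    (hE : MeasurableSet E) {c : ENNReal} (hc : ∀ᵐ x ∂μ, ν ((fun y => (y, x)) ⁻¹' E) = c)
    (A : Set X) :
    (ν.prod μ) (E ∩ Set.univ ×ˢ A) = c * μ A := by
  rw [← Measure.restrict_apply hE, ← Measure.prod_restrict, Measure.restrict_univ,
    Measure.prod_apply_symm hE, lintegral_congr_ae (ae_restrict_of_ae hc)]
  simp

theorem measurableSet_fiberSquare {E : Set (Y × X)} (hE : MeasurableSet E) :
    MeasurableSet (fiberSquare E) :=
  MeasurableSet.inter (hE.preimage (by fun_prop : Measurable fun q : Y × X × X => (q.1, q.2.1)))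
    (hE.preimage (by fun_prop : Measurable fun q : Y × X × X => (q.1, q.2.2)))

theorem prod_fiberSquare [SFinite μ] {E : Set (Y × X)} (hE : MeasurableSet E) :
    (ν.prod (μ.prod μ)) (fiberSquare E) = ∫⁻ y, μ (Prod.mk y ⁻¹' E) ^ 2 ∂ν := by
  rw [Measure.prod_apply (measurableSet_fiberSquare hE)]
  refine lintegral_congr fun y => ?_
  rw [sq, ← Measure.prod_prod]
  rfl

end Fibers

theorem ae_eq_const_of_lintegral_sq_eq {Ω : Type*} [MeasurableSpace Ω] {P : Measure Ω}
    [IsProbabilityMeasure P] {f : Ω → ENNReal} (hf : Measurable f) {c : ENNReal} (hc : c ≠ ⊤)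
    (hmean : ∫⁻ ω, f ω ∂P = c) (hsq : ∫⁻ ω, f ω ^ 2 ∂P = c ^ 2) :
    ∀ᵐ ω ∂P, f ω = c := by
  have hfin : ∀ᵐ ω ∂P, f ω < ⊤ := ae_lt_top hf (hmean.trans_ne hc)
  have hmean' : ∫ ω, (f ω).toReal ∂P = c.toReal := by
    rw [integral_toReal hf.aemeasurable hfin, hmean]
  have hsq' : ∫ ω, (f ω).toReal ^ 2 ∂P = c.toReal ^ 2 := by
    simp only [← ENNReal.toReal_pow]
    rw [integral_toReal (hf.pow_const 2).aemeasurable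
      (hfin.mono fun ω hω => ENNReal.pow_lt_top hω), hsq]
  have hmem : MemLp (fun ω => (f ω).toReal) 2 P := by
    rw [memLp_two_iff_integrable_sq hf.ennreal_toReal.aestronglyMeasurable]
    simp only [← ENNReal.toReal_pow]
    exact integrable_toReal_of_lintegral_ne_top (hf.pow_const 2).aemeasurable
      (hsq.trans_ne (ENNReal.pow_ne_top hc))
  have hvar : ProbabilityTheory.variance (fun ω => (f ω).toReal) P = 0 := by
    rw [ProbabilityTheory.variance_eq_sub hmem, hmean', sub_eq_zero]
    exact hsq'
  filter_upwards [ProbabilityTheory.ae_eq_integral_of_variance_eq_zero hmem hvar, hfin]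
    with ω hω hω_fin
  exact (ENNReal.toReal_eq_toReal_iff' hω_fin.ne hc).1 (hω.trans hmean')

section WeaklyMixing

variable {X Y : Type*} [MeasurableSpace X] [MeasurableSpace Y] {T : X → X} {S : Y → Y}
  {μ : Measure X} {ν : Measure Y}

/-- Weak mixing of `T` with respect to `μ`: the square `T × T` is ergodic for `μ × μ`. -/
def IsWeaklyMixing (T : X → X) (μ : Measure X) : Prop :=
  Ergodic (Prod.map T T) (μ.prod μ)

theorem IsWeaklyMixing.measurable (hT : IsWeaklyMixing T μ) : Measurable T :=
  measurable_fst.comp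
    (hT.toMeasurePreserving.measurable.comp (measurable_id.prodMk measurable_id))

theorem IsWeaklyMixing.ergodic [IsProbabilityMeasure μ] (hT : IsWeaklyMixing T μ) :
    Ergodic T μ :=
  measurePreserving_fst.ergodic_of_ergodic_semiconj hT hT.measurable fun _ => rfl

theorem IsWeaklyMixing.ae_measure_fiber_inter_eq [IsProbabilityMeasure ν] [IsProbabilityMeasure μ]
    (hT : IsWeaklyMixing T μ) (hS : Ergodic S ν) {E : Set (Y × X)} (hE : MeasurableSet E)
    (hinv : Prod.map S T ⁻¹' E = E) {A : Set X} (hA : MeasurableSet A) :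
    ∀ᵐ y ∂ν, μ (Prod.mk y ⁻¹' (E ∩ Set.univ ×ˢ A)) = (ν.prod μ) E * μ A := by
  have hEA : MeasurableSet (E ∩ Set.univ ×ˢ A) := hE.inter (MeasurableSet.univ.prod hA)
  have measure_fiberSquare :
      (ν.prod (μ.prod μ)) (fiberSquare E) = (ν.prod μ) E ^ 2 := by
    rw [prod_fiberSquare hE]
    trans ∫⁻ _, (ν.prod μ) E ^ 2 ∂ν
    · refine lintegral_congr_ae ?_
      filter_upwards [ae_measure_prodMk_preimage_eq hS hT.ergodic.toMeasurePreserving hE hinv]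
        with y hy
      rw [hy]
    · simp
  refine ae_eq_const_of_lintegral_sq_eq (measurable_measure_prodMk_left hEA) (by finiteness) ?_ ?_
  · rw [← Measure.prod_apply hEA]
    exact prod_inter_univ_prod_of_ae_eq hE
      (ae_measure_prodMk_right_preimage_eq hS.toMeasurePreserving hT.ergodic hE hinv) A
  · rw [← prod_fiberSquare hEA, fiberSquare_inter_univ_prod,
      prod_inter_univ_prod_of_ae_eq (measurableSet_fiberSquare hE)
        (ae_measure_prodMk_right_preimage_eq hS.toMeasurePreserving hT
          (measurableSet_fiberSquare hE) (preimage_fiberSquare hinv)),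
      measure_fiberSquare, Measure.prod_prod]
    ring

theorem IsWeaklyMixing.ergodic_prodMap [IsProbabilityMeasure ν] [IsProbabilityMeasure μ]
    (hT : IsWeaklyMixing T μ) (hS : Ergodic S ν) : Ergodic (Prod.map S T) (ν.prod μ) := by
  refine ⟨hS.toMeasurePreserving.prod hT.ergodic.toMeasurePreserving, ⟨fun {E} hE hinv => ?_⟩⟩
  have restrict_eq : (ν.prod μ).restrict E = (ν.prod μ) E • ν.prod μ := by
    refine Measure.ext_prod fun {B A} hB hA => ?_
    calc (ν.prod μ).restrict E (B ×ˢ A)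
        = (ν.prod μ) ((E ∩ Set.univ ×ˢ A) ∩ B ×ˢ Set.univ) := by
          rw [Measure.restrict_apply (hB.prod hA), Set.inter_comm, Set.inter_assoc,
            Set.prod_inter_prod, Set.univ_inter, Set.inter_univ]
      _ = (ν.prod μ) E * μ A * ν B :=
          prod_inter_prod_univ_of_ae_eq (hE.inter (MeasurableSet.univ.prod hA))
            (hT.ae_measure_fiber_inter_eq hS hE hinv hA) B
      _ = ((ν.prod μ) E • ν.prod μ) (B ×ˢ A) := by
          rw [Measure.smul_apply, smul_eq_mul, Measure.prod_prod]
          ring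
  have hsq : (ν.prod μ) E * (ν.prod μ) E = (ν.prod μ) E := by
    simpa using (congrArg (· E) restrict_eq).symm
  have h01 : (ν.prod μ) E = 0 ∨ (ν.prod μ) E = 1 := by
    rcases eq_or_ne ((ν.prod μ) E) 0 with h0 | h0
    · exact .inl h0
    · exact .inr ((ENNReal.mul_eq_left h0 (measure_ne_top _ _)).1 hsq)
  rw [eventuallyConst_set']
  exact h01.imp ae_eq_empty.2 fun h1 => ae_eq_univ.2 ((prob_compl_eq_zero_iff hE).2 h1)

theorem ergodic_pi.{u, v} {ι : Type u} [Fintype ι] {X : ι → Type v} [∀ i, MeasurableSpace (X i)]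
    {T : ∀ i, X i → X i} {μ : ∀ i, Measure (X i)} [∀ i, IsProbabilityMeasure (μ i)]
    (hT : ∀ i, IsWeaklyMixing (T i) (μ i)) :
    Ergodic (fun x i => T i (x i)) (Measure.pi μ) := by
  refine Fintype.induction_empty_option (P := fun ι _ => ∀ (X : ι → Type v)
    [∀ i, MeasurableSpace (X i)] (T : ∀ i, X i → X i) (μ : ∀ i, Measure (X i))
    [∀ i, IsProbabilityMeasure (μ i)], (∀ i, IsWeaklyMixing (T i) (μ i)) →
      Ergodic (fun x i => T i (x i)) (Measure.pi μ)) ?_ ?_ ?_ ι X T μ hT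
  · intro α β _ e ih X _ T μ _ hT
    let _ := Fintype.ofEquiv β e.symm
    refine (measurePreserving_piCongrLeft μ e).ergodic_of_ergodic_semiconj
      (ih _ _ _ fun i => hT (e i))
      (measurable_pi_lambda _ fun i => (hT i).measurable.comp (measurable_pi_apply i)) fun x => ?_
    funext i
    obtain ⟨i, rfl⟩ := e.surjective i
    simp [MeasurableEquiv.coe_piCongrLeft]
  · intro X _ T μ _ _
    exact ⟨measurePreserving_pi μ μ fun i => i.elim, ⟨fun _ _ _ => .of_subsingleton_left⟩⟩
  · intro α _ ih X _ T μ _ hT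
    have he : MeasurePreserving (MeasurableEquiv.piOptionEquivProd X).symm
        ((Measure.pi fun i => μ (some i)).prod (μ none)) (Measure.pi μ) :=
      ⟨MeasurableEquiv.measurable _, Measure.pi_map_piOptionEquivProd μ⟩
    refine he.ergodic_of_ergodic_semiconj
      ((hT none).ergodic_prodMap (ih _ _ _ fun i => hT (some i)))
      (measurable_pi_lambda _ fun i => (hT i).measurable.comp (measurable_pi_apply i)) fun x => ?_
    funext i
    cases i <;> rfl

end WeaklyMixing

section Independence

open ProbabilityTheory

theorem indepFun_of_comp_eq_self {Ω α β : Type*} [MeasurableSpace Ω] [MeasurableSpace α]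
    [MeasurableSpace β] {P : Measure Ω} [IsProbabilityMeasure P] {m : Measure β}
    {g : Ω → Ω} {S : β → β} {f : Ω → α} {r : Ω → β} (hg : MeasurePreserving g P P)
    (hf : Measurable f) (hfg : f ∘ g = f) (hr : MeasurePreserving r P m) (hS : Ergodic S m)
    (hrg : Function.Semiconj r g S) : IndepFun f r P := by
  have : IsProbabilityMeasure m :=
    hr.map_eq ▸ Measure.isProbabilityMeasure_map hr.measurable.aemeasurable
  rw [indepFun_iff_measure_inter_preimage_eq_mul]
  intro s t hs ht
  have preimage_invariant : g ⁻¹' (f ⁻¹' s) = f ⁻¹' s := by rw [← Set.preimage_comp, hfg]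
  have restrict_invariant :
      MeasurePreserving g (P.restrict (f ⁻¹' s)) (P.restrict (f ⁻¹' s)) := by
    simpa only [preimage_invariant] using hg.restrict_preimage (hf hs)
  have map_invariant : MeasurePreserving S ((P.restrict (f ⁻¹' s)).map r)
      ((P.restrict (f ⁻¹' s)).map r) :=
    (hr.measurable.measurePreserving _).of_semiconj restrict_invariant hrg hS.measurable
  have map_ac : (P.restrict (f ⁻¹' s)).map r ≪ m := by
    rw [← hr.map_eq]
    exact Measure.restrict_le_self.absolutelyContinuous.map hr.measurable
  obtain ⟨c, hc⟩ := hS.eq_smul_of_absolutelyContinuous map_invariant map_ac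
  have hc' (u : Set β) (hu : MeasurableSet u) : P (f ⁻¹' s ∩ r ⁻¹' u) = c * m u := by
    rw [Set.inter_comm, ← Measure.restrict_apply (hr.measurable hu),
      ← Measure.map_apply hr.measurable hu, hc, Measure.smul_apply, smul_eq_mul]
  have hcs : P (f ⁻¹' s) = c := by simpa using hc' Set.univ .univ
  rw [hc' t ht, hcs, hr.measure_preimage ht.nullMeasurableSet]

end Independence

section UniqueErgodicity

open ProbabilityTheory

/-- Unique ergodicity of the action generated by a set `G` of self-maps: the measure `m` is
invariant under every map in `G`, and is the only such probability measure. That `m` itself has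
total mass one is left to the context. -/
def UniquelyErgodic {Y : Type*} [MeasurableSpace Y] (G : Set (Y → Y)) (m : Measure Y) : Prop :=
  (∀ g ∈ G, MeasurePreserving g m m) ∧
    ∀ ν : Measure Y, IsProbabilityMeasure ν → (∀ g ∈ G, MeasurePreserving g ν ν) → ν = m

variable {ι : Type*} {X : ι → Type*}

open Classical in
/-- The transformation of a product space that applies `T i` to the coordinates `i ∈ A` and fixes
the others; face and diagonal transformations are of this form. -/
noncomputable def coordMap (T : ∀ i, X i → X i) (A : Set ι) (x : ∀ i, X i) : ∀ i, X i :=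
  A.piecewise (fun i => T i (x i)) x

variable {T : ∀ i, X i → X i} {A : Set ι} {i : ι}

theorem coordMap_apply_of_mem (hi : i ∈ A) (x : ∀ i, X i) : coordMap T A x i = T i (x i) := by
  simp [coordMap, hi]

theorem coordMap_apply_of_notMem (hi : i ∉ A) (x : ∀ i, X i) : coordMap T A x i = x i := by
  simp [coordMap, hi]

variable [∀ i, MeasurableSpace (X i)] {μ : ∀ i, Measure (X i)}

theorem measurePreserving_coordMap [Fintype ι] [∀ i, SigmaFinite (μ i)]
    (hT : ∀ i, MeasurePreserving (T i) (μ i) (μ i)) :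
    MeasurePreserving (coordMap T A) (Measure.pi μ) (Measure.pi μ) := by
  classical
  convert measurePreserving_pi μ μ (f := fun i => if i ∈ A then T i else id) fun i => ?_ with x i
  · by_cases hi : i ∈ A <;> simp [coordMap, hi]
  · split_ifs
    exacts [hT i, .id _]

theorem measurePreserving_restrict_union [DecidableEq ι] [∀ i, SigmaFinite (μ i)]
    {P : Measure (∀ i, X i)} [IsFiniteMeasure P] {s t : Finset ι} (hst : Disjoint s t)
    (hs : MeasurePreserving s.restrict P (Measure.pi fun i : s => μ i))
    (ht : MeasurePreserving t.restrict P (Measure.pi fun i : t => μ i))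
    (hindep : IndepFun s.restrict t.restrict P) :
    MeasurePreserving (s ∪ t).restrict P (Measure.pi fun i : ↥(s ∪ t) => μ i) := by
  have hprod : MeasurePreserving (fun x => (s.restrict x, t.restrict x)) P
      ((Measure.pi fun i : s => μ i).prod (Measure.pi fun i : t => μ i)) :=
    ⟨hs.measurable.prodMk ht.measurable, by
      rw [(indepFun_iff_map_prod_eq_prod_map_map hs.measurable.aemeasurable
        ht.measurable.aemeasurable).1 hindep, hs.map_eq, ht.map_eq]⟩
  convert (measurePreserving_piFinsetUnion hst μ).comp hprod using 1
  ext x i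
  obtain ⟨i, hi⟩ := i
  rcases Finset.mem_union.1 hi with his | hit
  · exact (Equiv.piFinsetUnion_left X hst (f := s.restrict x) (g := t.restrict x) his hi).symm
  · exact (Equiv.piFinsetUnion_right X hst (f := s.restrict x) (g := t.restrict x) hit hi).symm

theorem measurePreserving_restrict_union_of_separated [DecidableEq ι]
    [∀ i, IsProbabilityMeasure (μ i)]
    (hT : ∀ i, IsWeaklyMixing (T i) (μ i)) {P : Measure (∀ i, X i)} [IsProbabilityMeasure P]
    (hP : MeasurePreserving (coordMap T A) P P) {s t : Finset ι}
    (hsA : ∀ i ∈ s, i ∈ A) (htA : ∀ i ∈ t, i ∉ A)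
    (hs : MeasurePreserving s.restrict P (Measure.pi fun i : s => μ i))
    (ht : MeasurePreserving t.restrict P (Measure.pi fun i : t => μ i)) :
    MeasurePreserving (s ∪ t).restrict P (Measure.pi fun i : ↥(s ∪ t) => μ i) := by
  refine measurePreserving_restrict_union
    (Finset.disjoint_left.2 fun i his hit => htA i hit (hsA i his)) hs ht ?_
  refine (indepFun_of_comp_eq_self hP ht.measurable ?_ hs (ergodic_pi fun i : s => hT i) ?_).symm
  · ext x i
    exact coordMap_apply_of_notMem (htA i i.2) x
  · intro x
    ext i
    exact coordMap_apply_of_mem (hsA i i.2) x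

theorem measurePreserving_eval_of_coordMap (hT : UniquelyErgodic {T i} (μ i))
    (hi : i ∈ A) {P : Measure (∀ i, X i)} [IsProbabilityMeasure P]
    (hP : MeasurePreserving (coordMap T A) P P) :
    MeasurePreserving (Function.eval i) P (μ i) := by
  refine ⟨measurable_pi_apply i, hT.2 _
    (Measure.isProbabilityMeasure_map (measurable_pi_apply i).aemeasurable) ?_⟩
  rintro _ rfl
  exact ((measurable_pi_apply i).measurePreserving P).of_semiconj hP
    (fun x => coordMap_apply_of_mem hi x) (hT.1 _ rfl).measurable

theorem measurePreserving_restrict_of_coordMap [∀ i, IsProbabilityMeasure (μ i)]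
    {𝒜 : Set (Set ι)} (hcover : ∀ i, ∃ A ∈ 𝒜, i ∈ A)
    (hsep : Pairwise fun i j => ∃ A ∈ 𝒜, ¬(i ∈ A ↔ j ∈ A))
    (hT : ∀ i, UniquelyErgodic {T i} (μ i)) (hwm : ∀ i, IsWeaklyMixing (T i) (μ i))
    {P : Measure (∀ i, X i)} [IsProbabilityMeasure P]
    (hP : ∀ A ∈ 𝒜, MeasurePreserving (coordMap T A) P P) (J : Finset ι) :
    MeasurePreserving J.restrict P (Measure.pi fun i : J => μ i) := by
  classical
  induction J using Finset.strongInduction with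
  | H J ih =>
    rcases J.eq_empty_or_nonempty with rfl | hJ
    · have := Measure.isProbabilityMeasure_map (μ := P)
        (Finset.measurable_restrict (X := X) ∅).aemeasurable
      refine ⟨Finset.measurable_restrict _, (Measure.pi_eq fun s _ => ?_).symm⟩
      simp [Set.univ_pi_eq_iInter]
    rcases hJ.exists_eq_singleton_or_nontrivial with ⟨i, rfl⟩ | hJ
    · obtain ⟨A, hA, hi⟩ := hcover i
      convert (measurePreserving_piUnique fun j : ({i} : Finset ι) => μ j).symm.comp
        (measurePreserving_eval_of_coordMap (hT i) hi (hP A hA)) using 1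
      ext x j
      obtain ⟨j, hj⟩ := j
      obtain rfl := Finset.mem_singleton.1 hj
      rfl
    · obtain ⟨i, hiJ, j, hjJ, hij⟩ := hJ
      obtain ⟨A, hA, hAij⟩ := hsep hij
      rw [← Finset.filter_union_filter_not_eq (· ∈ A) J]
      refine measurePreserving_restrict_union_of_separated hwm (hP A hA)
        (fun i hi => (Finset.mem_filter.1 hi).2) (fun i hi => (Finset.mem_filter.1 hi).2)
        (ih _ ?_) (ih _ ?_)
      · rw [Finset.filter_ssubset]
        grind
      · rw [Finset.filter_ssubset]
        grind

theorem eq_pi_of_measurePreserving_restrict_univ [Fintype ι] [∀ i, SigmaFinite (μ i)]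
    {P : Measure (∀ i, X i)}
    (hP : MeasurePreserving (Finset.univ : Finset ι).restrict P
      (Measure.pi fun i : (Finset.univ : Finset ι) => μ i)) : P = Measure.pi μ := by
  let e : (Finset.univ : Finset ι) ≃ ι := Equiv.subtypeUnivEquiv Finset.mem_univ
  have hid : MeasurableEquiv.piCongrLeft X e ∘ (Finset.univ : Finset ι).restrict = id := by
    funext x i
    exact Equiv.piCongrLeft_apply_apply X e (Finset.univ.restrict x) ⟨i, Finset.mem_univ i⟩
  simpa only [hid, Measure.map_id] using ((measurePreserving_piCongrLeft μ e).comp hP).map_eq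

theorem uniquelyErgodic_coordMap [Fintype ι] [∀ i, IsProbabilityMeasure (μ i)]
    {𝒜 : Set (Set ι)} (hcover : ∀ i, ∃ A ∈ 𝒜, i ∈ A)
    (hsep : Pairwise fun i j => ∃ A ∈ 𝒜, ¬(i ∈ A ↔ j ∈ A))
    (hT : ∀ i, UniquelyErgodic {T i} (μ i)) (hwm : ∀ i, IsWeaklyMixing (T i) (μ i)) :
    UniquelyErgodic (coordMap T '' 𝒜) (Measure.pi μ) := by
  refine ⟨?_, fun P _ hP => ?_⟩
  · rintro _ ⟨A, -, rfl⟩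
    exact measurePreserving_coordMap fun i => (hwm i).ergodic.toMeasurePreserving
  · exact eq_pi_of_measurePreserving_restrict_univ
      (measurePreserving_restrict_of_coordMap hcover hsep hT hwm (Set.forall_mem_image.1 hP) _)

end UniqueErgodicity

section Faces

variable {X : Type*} [TopologicalSpace X] (T : X ≃ₜ X) (d : ℕ)

theorem coe_faceHomeo (j : Fin d) :
    ⇑(faceHomeo T j) = coordMap (fun _ => T) {ε : Fin d → Bool | ε j} := by
  funext x ε
  change (if ε j then T else Homeomorph.refl X) (x ε) = _
  by_cases h : ε j <;> simp [coordMap, h]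

theorem coe_faceHomeoStar (j : Fin d) :
    ⇑(faceHomeoStar T j) = coordMap (fun _ => T) {ε : starIndex d | ε.1 j} := by
  funext x ε
  change (if ε.1 j then T else Homeomorph.refl X) (x ε) = _
  by_cases h : ε.1 j <;> simp [coordMap, h]

theorem coe_diagHomeo : ⇑(diagHomeo T d) = coordMap (fun _ => T) Set.univ := by
  funext x ε
  exact (coordMap_apply_of_mem (T := fun _ => ⇑T) (Set.mem_univ ε) x).symm

theorem image_coe_parallelepipedGens :
    (⇑) '' parallelepipedGens T d =
      coordMap (fun _ => T) '' insert Set.univ (Set.range fun j => {ε : Fin d → Bool | ε j}) := by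
  simp only [parallelepipedGens, faceGens, Set.image_insert_eq, ← Set.range_comp, coe_diagHomeo]
  simp only [Function.comp_def, coe_faceHomeo]

theorem image_coe_faceGensStar :
    (⇑) '' faceGensStar T d =
      coordMap (fun _ => T) '' Set.range fun j => {ε : starIndex d | ε.1 j} := by
  simp only [faceGensStar, ← Set.range_comp, Function.comp_def, coe_faceHomeoStar]

variable {T}

theorem uniquelyErgodic_parallelepipedGens [MeasurableSpace X]
    {μ : Measure X} [IsProbabilityMeasure μ] (hT : UniquelyErgodic {⇑T} μ)
    (hwm : IsWeaklyMixing T μ) :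
    UniquelyErgodic ((⇑) '' parallelepipedGens T d) (Measure.pi fun _ => μ) := by
  rw [image_coe_parallelepipedGens]
  refine uniquelyErgodic_coordMap (fun ε => ⟨_, Set.mem_insert _ _, Set.mem_univ ε⟩)
    (fun ε ε' h => ?_) (fun _ => hT) fun _ => hwm
  obtain ⟨j, hj⟩ := Function.ne_iff.1 h
  exact ⟨_, Set.mem_insert_of_mem _ ⟨j, rfl⟩, mt Bool.eq_iff_iff.2 hj⟩

theorem uniquelyErgodic_faceGensStar [MeasurableSpace X]
    {μ : Measure X} [IsProbabilityMeasure μ] (hT : UniquelyErgodic {⇑T} μ)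
    (hwm : IsWeaklyMixing T μ) :
    UniquelyErgodic ((⇑) '' faceGensStar T d) (Measure.pi fun _ => μ) := by
  rw [image_coe_faceGensStar]
  refine uniquelyErgodic_coordMap (fun ε => ?_) (fun ε ε' h => ?_) (fun _ => hT) fun _ => hwm
  · obtain ⟨j, hj⟩ := Function.ne_iff.1 ε.2
    exact ⟨_, ⟨j, rfl⟩, by simpa using hj⟩
  · obtain ⟨j, hj⟩ := Function.ne_iff.1 (Subtype.coe_injective.ne h)
    exact ⟨_, ⟨j, rfl⟩, mt Bool.eq_iff_iff.2 hj⟩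

end Faces

theorem prop_weakMixing_faces_general {X : Type*} [TopologicalSpace X] [MeasurableSpace X]
    {T : X ≃ₜ X} {μ : Measure X} [IsProbabilityMeasure μ] (hT : UniquelyErgodic {⇑T} μ)
    (hwm : IsWeaklyMixing T μ) (d : ℕ) :
    UniquelyErgodic ((⇑) '' parallelepipedGens T d) (Measure.pi fun _ => μ) ∧
      UniquelyErgodic ((⇑) '' faceGensStar T d) (Measure.pi fun _ => μ) :=
  ⟨uniquelyErgodic_parallelepipedGens d hT hwm, uniquelyErgodic_faceGensStar d hT hwm⟩

/-- **Proposition (weakly mixing systems).** Let `(X, T)` be a uniquely ergodic t.d.s. whose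
unique invariant measure `μ` is weakly mixing. Then (1) the parallelepiped group `G^[d]`
acting on `X^[d]` is uniquely ergodic with unique invariant measure the `2^d`-fold product
of `μ`, and (2) the face group `F^[d]` acting on `X^[d]_*` is uniquely ergodic with unique
invariant measure the `(2^d - 1)`-fold product of `μ`. -/
theorem prop_weakMixing_faces {X : Type*} [MetricSpace X] [CompactSpace X]
    [MeasurableSpace X] [BorelSpace X] (T : X ≃ₜ X)
    (μ : Measure X) [IsProbabilityMeasure μ] (hinv : MeasurePreserving T μ μ)
    (huniq : ∀ ν : Measure X, IsProbabilityMeasure ν → MeasurePreserving T ν ν → ν = μ)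
    (hwm : Ergodic (Prod.map T T) (μ.prod μ)) (d : ℕ) (hd : 1 ≤ d) :
    ((∀ g ∈ parallelepipedGens T d,
        MeasurePreserving g (Measure.pi fun _ : Fin d → Bool => μ) (Measure.pi fun _ => μ)) ∧
      (∀ ν : Measure ((Fin d → Bool) → X), IsProbabilityMeasure ν →
        (∀ g ∈ parallelepipedGens T d, MeasurePreserving g ν ν) →
        ν = Measure.pi fun _ => μ)) ∧
    ((∀ g ∈ faceGensStar T d,
        MeasurePreserving g (Measure.pi fun _ : starIndex d => μ) (Measure.pi fun _ => μ)) ∧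
      (∀ ν : Measure (starIndex d → X), IsProbabilityMeasure ν →
        (∀ g ∈ faceGensStar T d, MeasurePreserving g ν ν) →
        ν = Measure.pi fun _ => μ)) := by
  simpa only [UniquelyErgodic, Set.forall_mem_image] using
    prop_weakMixing_faces_general ⟨by simpa, by simpa⟩ hwm d

end HSY
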